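/- The rewrite relation of the name algebra is confluent: for all terms a, b, c, if a →* b and a →* c, then there exists a term d such that b →* d and c →* d. -/

import Mathlib

/-- Terms of the name algebra over atoms in ℕ. -/
inductive Term : Type
  | var : ℕ → Term
  | projL : Term → Term
  | projR : Term → Term
  | join : Term → Term → Term
deriving DecidableEq

/-- One-step rewrite relation: the three rules `(u ∧ v).l → u`, `(u ∧ v).r → v`,
`(u.l ∧ u.r) → u`, closed under all term contexts. -/
inductive Step : Term → Term → Prop
  | splitL (u v : Term) : Step (Term.projL (Term.join u v)) u
  | splitR (u v : Term) : Step (Term.projR (Term.join u v)) v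
  | merge (u : Term) : Step (Term.join (Term.projL u) (Term.projR u)) u
  | congL {a b : Term} : Step a b → Step (Term.projL a) (Term.projL b)
  | congR {a b : Term} : Step a b → Step (Term.projR a) (Term.projR b)
  | congJoinL {a b : Term} (v : Term) : Step a b → Step (Term.join a v) (Term.join b v)
  | congJoinR {a b : Term} (u : Term) : Step a b → Step (Term.join u a) (Term.join u b)

/-- Reflexive-transitive closure of `Step`. -/
def Steps : Term → Term → Prop := Relation.ReflTransGen Step

/-- A term is in normal form if no rewrite step applies to it. -/
def NormalForm (n : Term) : Prop := ¬ ∃ m, Step n m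

/-- `u ≈ v` : the normal forms of `u` and `v` coincide, i.e. they reach a common normal form. -/
def TermEquiv (u v : Term) : Prop := ∃ n, NormalForm n ∧ Steps u n ∧ Steps v n

/-!
Contracting the root redex, if there is one, after normalizing the arguments gives a structurally
recursive normalizer. Each rewrite rule, read as an equation, holds for these contractions on normal
forms, so normal forms are a model of the equational theory and the normalizer is invariant under
rewriting. Hence all reducts of `a` rewrite to the normal form of `a`.
-/

theorem join_reflTransGen_of_map_eq {α : Type*} {r : α → α → Prop} {f : α → α}
    (reaches : ∀ a, Relation.ReflTransGen r a (f a)) (invariant : ∀ a b, r a b → f a = f b)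
    {a b c : α} (hab : Relation.ReflTransGen r a b) (hac : Relation.ReflTransGen r a c) :
    Relation.Join (Relation.ReflTransGen r) b c := by
  have map_eq {x y : α} (hxy : Relation.ReflTransGen r x y) : f x = f y := by
    induction hxy with
    | refl => rfl
    | tail _ hstep ih => exact ih.trans (invariant _ _ hstep)
  refine ⟨f a, ?_, ?_⟩
  · exact map_eq hab ▸ reaches b
  · exact map_eq hac ▸ reaches c

namespace Steps

variable {a a' b b' : Term}

theorem projL (h : Steps a a') : Steps a.projL a'.projL :=
  Relation.ReflTransGen.lift Term.projL (fun _ _ => Step.congL) _ _ h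

theorem projR (h : Steps a a') : Steps a.projR a'.projR :=
  Relation.ReflTransGen.lift Term.projR (fun _ _ => Step.congR) _ _ h

theorem join (ha : Steps a a') (hb : Steps b b') : Steps (a.join b) (a'.join b') :=
  (Relation.ReflTransGen.lift (Term.join · b) (fun _ _ => Step.congJoinL b) _ _ ha).trans
    (Relation.ReflTransGen.lift (Term.join a') (fun _ _ => Step.congJoinR a') _ _ hb)

end Steps

theorem normalForm_var (n : ℕ) : NormalForm (.var n) := by
  rintro ⟨_, ⟨⟩⟩

theorem normalForm_projL_iff {t : Term} :
    NormalForm t.projL ↔ NormalForm t ∧ ∀ u v, t ≠ .join u v := by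
  constructor
  · intro h
    refine ⟨fun ⟨_, hm⟩ => h ⟨_, .congL hm⟩, ?_⟩
    rintro u v rfl
    exact h ⟨u, .splitL u v⟩
  · rintro ⟨ht, hne⟩ ⟨_, hstep⟩
    cases hstep with
    | splitL => exact hne _ _ rfl
    | congL hm => exact ht ⟨_, hm⟩

theorem normalForm_projR_iff {t : Term} :
    NormalForm t.projR ↔ NormalForm t ∧ ∀ u v, t ≠ .join u v := by
  constructor
  · intro h
    refine ⟨fun ⟨_, hm⟩ => h ⟨_, .congR hm⟩, ?_⟩
    rintro u v rfl
    exact h ⟨v, .splitR u v⟩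
  · rintro ⟨ht, hne⟩ ⟨_, hstep⟩
    cases hstep with
    | splitR => exact hne _ _ rfl
    | congR hm => exact ht ⟨_, hm⟩

theorem normalForm_join_iff {a b : Term} :
    NormalForm (a.join b) ↔
      NormalForm a ∧ NormalForm b ∧ ¬∃ u : Term, a = u.projL ∧ b = u.projR := by
  constructor
  · intro h
    refine ⟨fun ⟨_, hm⟩ => h ⟨_, .congJoinL b hm⟩, fun ⟨_, hm⟩ => h ⟨_, .congJoinR a hm⟩, ?_⟩
    rintro ⟨u, rfl, rfl⟩
    exact h ⟨u, .merge u⟩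
  · rintro ⟨ha, hb, hne⟩ ⟨_, hstep⟩
    cases hstep with
    | merge => exact hne ⟨_, rfl, rfl⟩
    | congJoinL _ hm => exact ha ⟨_, hm⟩
    | congJoinR _ hm => exact hb ⟨_, hm⟩

namespace Term

/-- The left projection of `t`, with the root redex of `t.projL` contracted if there is one. -/
def contractL : Term → Term
  | join u _ => u
  | t => projL t

/-- The right projection of `t`, with the root redex of `t.projR` contracted if there is one. -/
def contractR : Term → Term
  | join _ v => v
  | t => projR t

/-- The join of `a` and `b`, with the root redex of `a.join b` contracted if there is one. -/
def contractJoin : Term → Term → Term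
  | projL u, projR v => if u = v then u else join (projL u) (projR v)
  | a, b => join a b

/-- The normal form of a term, computed bottom-up: normalizing the arguments first leaves at most
one redex, at the root. -/
def normalize : Term → Term
  | var n => var n
  | projL t => contractL (normalize t)
  | projR t => contractR (normalize t)
  | join a b => contractJoin (normalize a) (normalize b)

variable {a b t : Term}

theorem contractL_of_ne_join (h : ∀ u v, t ≠ join u v) : contractL t = projL t := by
  cases t with
  | join u v => exact absurd rfl (h u v)
  | _ => rfl

theorem contractR_of_ne_join (h : ∀ u v, t ≠ join u v) : contractR t = projR t := by
  cases t with
  | join u v => exact absurd rfl (h u v)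
  | _ => rfl

theorem contractJoin_projL_projR (u : Term) : contractJoin (projL u) (projR u) = u :=
  if_pos rfl

theorem contractJoin_of_not_exists (h : ¬∃ u, a = projL u ∧ b = projR u) :
    contractJoin a b = join a b := by
  unfold contractJoin
  split
  next u v => exact if_neg fun huv : u = v => h ⟨u, rfl, huv ▸ rfl⟩
  next => rfl

theorem steps_contractL (t : Term) : Steps (projL t) (contractL t) := by
  cases t with
  | join u v => exact .single (.splitL u v)
  | _ => exact .refl

theorem steps_contractR (t : Term) : Steps (projR t) (contractR t) := by
  cases t with
  | join u v => exact .single (.splitR u v)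
  | _ => exact .refl

theorem steps_contractJoin (a b : Term) : Steps (join a b) (contractJoin a b) := by
  by_cases h : ∃ u, a = projL u ∧ b = projR u
  · obtain ⟨u, rfl, rfl⟩ := h
    rw [contractJoin_projL_projR]
    exact .single (.merge u)
  · rw [contractJoin_of_not_exists h]
    exact .refl

theorem steps_normalize (t : Term) : Steps t (normalize t) := by
  induction t with
  | var n => exact .refl
  | projL t ih => exact ih.projL.trans (steps_contractL _)
  | projR t ih => exact ih.projR.trans (steps_contractR _)
  | join a b iha ihb => exact (iha.join ihb).trans (steps_contractJoin _ _)

theorem normalForm_contractL (ht : NormalForm t) : NormalForm (contractL t) := by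
  cases t with
  | join u v => exact (normalForm_join_iff.mp ht).1
  | _ => exact normalForm_projL_iff.mpr ⟨ht, nofun⟩

theorem normalForm_contractR (ht : NormalForm t) : NormalForm (contractR t) := by
  cases t with
  | join u v => exact (normalForm_join_iff.mp ht).2.1
  | _ => exact normalForm_projR_iff.mpr ⟨ht, nofun⟩

theorem normalForm_contractJoin (ha : NormalForm a) (hb : NormalForm b) :
    NormalForm (contractJoin a b) := by
  by_cases h : ∃ u, a = projL u ∧ b = projR u
  · obtain ⟨u, rfl, rfl⟩ := h
    rw [contractJoin_projL_projR]
    exact (normalForm_projL_iff.mp ha).1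
  · rw [contractJoin_of_not_exists h]
    exact normalForm_join_iff.mpr ⟨ha, hb, h⟩

theorem normalForm_normalize (t : Term) : NormalForm (normalize t) := by
  induction t with
  | var n => exact normalForm_var n
  | projL t ih => exact normalForm_contractL ih
  | projR t ih => exact normalForm_contractR ih
  | join a b iha ihb => exact normalForm_contractJoin iha ihb

theorem contractL_contractJoin (ha : NormalForm a) (b : Term) :
    contractL (contractJoin a b) = a := by
  by_cases h : ∃ u, a = projL u ∧ b = projR u
  · obtain ⟨u, rfl, rfl⟩ := h
    rw [contractJoin_projL_projR]
    exact contractL_of_ne_join (normalForm_projL_iff.mp ha).2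
  · rw [contractJoin_of_not_exists h, contractL]

theorem contractR_contractJoin (a : Term) (hb : NormalForm b) :
    contractR (contractJoin a b) = b := by
  by_cases h : ∃ u, a = projL u ∧ b = projR u
  · obtain ⟨u, rfl, rfl⟩ := h
    rw [contractJoin_projL_projR]
    exact contractR_of_ne_join (normalForm_projR_iff.mp hb).2
  · rw [contractJoin_of_not_exists h, contractR]

theorem contractJoin_contractL_contractR (ht : NormalForm t) :
    contractJoin (contractL t) (contractR t) = t := by
  cases t with
  | join a b => exact contractJoin_of_not_exists (normalForm_join_iff.mp ht).2.2
  | _ => exact contractJoin_projL_projR _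

end Term

theorem Step.normalize_eq {a b : Term} (h : Step a b) : a.normalize = b.normalize := by
  induction h with
  | splitL u v => exact Term.contractL_contractJoin u.normalForm_normalize _
  | splitR u v => exact Term.contractR_contractJoin _ v.normalForm_normalize
  | merge u => exact Term.contractJoin_contractL_contractR u.normalForm_normalize
  | congL _ ih => exact congrArg Term.contractL ih
  | congR _ ih => exact congrArg Term.contractR ih
  | congJoinL v _ ih => exact congrArg (Term.contractJoin · v.normalize) ih
  | congJoinR u _ ih => exact congrArg (Term.contractJoin u.normalize) ih

/-- The rewrite relation of the name algebra is confluent. -/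
theorem step_confluent :
    ∀ a b c : Term, Steps a b → Steps a c → ∃ d, Steps b d ∧ Steps c d :=
  fun _ _ _ => join_reflTransGen_of_map_eq Term.steps_normalize fun _ _ => Step.normalize_eq
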